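/- Let T be a right H-comodule. Then: (i) the map δ : H ⊗ T → (H ⊗ T) ⊗ H, δ(x⊗t) = x⁽²⁾ ⊗ t₍₀₎ ⊗ x⁽³⁾ t₍₁₎ S(x⁽¹⁾), is a coassociative and counital right H-comodule structure on H ⊗ T; (ii) the map T → H ⊗ T, t ↦ 1 ⊗ t, is a morphism of right H-comodules; (iii) the map H ⊗ H ⊗ T → H ⊗ T, x ⊗ y ⊗ t ↦ xy ⊗ t, is a morphism of right H-comodules, where H ⊗ H ⊗ T carries the coaction x ⊗ y ⊗ t ↦ x⁽²⁾ ⊗ y⁽²⁾ ⊗ t₍₀₎ ⊗ x⁽³⁾ y⁽³⁾ t₍₁₎ S(y⁽¹⁾) S(x⁽¹⁾) obtained by applying the construction of (i) twice. -/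

import Mathlib

/-!
# Statement 16

`k` a field, `H` a Hopf algebra over `k`, `T` a right `H`-comodule with coaction
`ρT(t) = t₍₀₎ ⊗ t₍₁₎`.  Then:
(i) `δ(x ⊗ t) = x⁽²⁾ ⊗ t₍₀₎ ⊗ x⁽³⁾ t₍₁₎ S(x⁽¹⁾)` is a coassociative counital right
`H`-comodule structure on `H ⊗ T` (the map `coact` below);
(ii) `t ↦ 1 ⊗ t` is a morphism of right `H`-comodules `T → H ⊗ T`;
(iii) `x ⊗ y ⊗ t ↦ x y ⊗ t` is a morphism of right `H`-comodules, where `H ⊗ (H ⊗ T)` carries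
the coaction obtained by applying the construction of (i) twice.
-/

open TensorProduct

noncomputable section

variable (k : Type) [Field k]
variable (H : Type) [Ring H] [HopfAlgebra k H]

/-- The coaction `δ(x ⊗ t) = (x⁽²⁾ ⊗ t₍₀₎) ⊗ x⁽³⁾ t₍₁₎ S(x⁽¹⁾)` on `H ⊗ T`, for any
right `H`-comodule `(T, ρT)`. -/
def coact (T : Type) [AddCommGroup T] [Module k T] (ρT : T →ₗ[k] T ⊗[k] H) :
    H ⊗[k] T →ₗ[k] (H ⊗[k] T) ⊗[k] H :=
  (LinearMap.lTensor (H ⊗[k] T)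
      ((LinearMap.mul' k H) ∘ₗ (LinearMap.lTensor H (LinearMap.mul' k H)))) ∘ₗ
    (TensorProduct.assoc k H T (H ⊗[k] (H ⊗[k] H))).symm.toLinearMap ∘ₗ
    (LinearMap.lTensor H (TensorProduct.leftComm k H T (H ⊗[k] H)).toLinearMap) ∘ₗ
    (LinearMap.lTensor H (LinearMap.lTensor H
      (LinearMap.lTensor T (TensorProduct.comm k H H).toLinearMap))) ∘ₗ
    (LinearMap.lTensor H (LinearMap.lTensor H
      (TensorProduct.leftComm k H T H).toLinearMap)) ∘ₗ
    (LinearMap.lTensor H (TensorProduct.leftComm k H H (T ⊗[k] H)).toLinearMap) ∘ₗ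
    (TensorProduct.assoc k H H (H ⊗[k] (T ⊗[k] H))).toLinearMap ∘ₗ
    (LinearMap.rTensor (H ⊗[k] (T ⊗[k] H)) (TensorProduct.comm k H H).toLinearMap) ∘ₗ
    (TensorProduct.assoc k (H ⊗[k] H) H (T ⊗[k] H)).toLinearMap ∘ₗ
    (LinearMap.rTensor (T ⊗[k] H) (TensorProduct.assoc k H H H).symm.toLinearMap) ∘ₗ
    (LinearMap.rTensor (T ⊗[k] H)
      (LinearMap.rTensor (H ⊗[k] H) (HopfAlgebra.antipode (R := k)))) ∘ₗ
    (LinearMap.rTensor (T ⊗[k] H)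
      ((LinearMap.lTensor H (Coalgebra.comul (R := k))) ∘ₗ (Coalgebra.comul (R := k)))) ∘ₗ
    (LinearMap.lTensor H ρT)

/-- The multiplication map `H ⊗ (H ⊗ T) → H ⊗ T`, `x ⊗ (y ⊗ t) ↦ x y ⊗ t`. -/
def actHT (T : Type) [AddCommGroup T] [Module k T] :
    H ⊗[k] (H ⊗[k] T) →ₗ[k] H ⊗[k] T :=
  (LinearMap.rTensor T (LinearMap.mul' k H)) ∘ₗ
    (TensorProduct.assoc k H H T).symm.toLinearMap

/-!
Coactions of `A` behave like representations: maps `V → W ⊗ A` compose in the Kleisli category of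
the monad `- ⊗ A`, and since `Δ` and `ε` are algebra maps, the composite of two commuting coactions
on `V` is again a coaction. The coaction `δ` on `A ⊗ V` is the composite of three pairwise commuting
ones, namely `x ↦ x⁽¹⁾ ⊗ x⁽²⁾` on the first factor, the given coaction on the second, and
`x ↦ x⁽²⁾ ⊗ S(x⁽¹⁾)` on the first; this is the action `g • (x ⊗ v) = g x g⁻¹ ⊗ g v` in disguise.
The multiplication map intertwines each of the three with its iterate, because `Δ` is multiplicative
and `S` is antimultiplicative.
-/

open Coalgebra HopfAlgebra

section KleisliComp

variable {R A U V W : Type*} [CommSemiring R] [Semiring A] [Algebra R A]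
  [AddCommMonoid U] [Module R U] [AddCommMonoid V] [Module R V] [AddCommMonoid W] [Module R W]

/-- The extension `v ⊗ a ↦ f(v)₍₀₎ ⊗ f(v)₍₁₎ a` of `f : V → W ⊗ A` to a right `A`-linear map. -/
def kleisliExtend (f : V →ₗ[R] W ⊗[R] A) : V ⊗[R] A →ₗ[R] W ⊗[R] A :=
  LinearMap.lTensor W (LinearMap.mul' R A) ∘ₗ (TensorProduct.assoc R W A A).toLinearMap ∘ₗ
    LinearMap.rTensor A f

/-- The Kleisli composite `u ↦ f(g(u)₍₀₎)₍₀₎ ⊗ f(g(u)₍₀₎)₍₁₎ g(u)₍₁₎` for the monad `- ⊗ A`. Under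
the dictionary between `A`-coactions and representations it is the product of two operators. -/
def kleisliComp (f : V →ₗ[R] W ⊗[R] A) (g : U →ₗ[R] V ⊗[R] A) : U →ₗ[R] W ⊗[R] A :=
  kleisliExtend f ∘ₗ g

end KleisliComp

local infixr:80 " ∘ₖ " => kleisliComp

section KleisliCategory

variable {R A B U V W X : Type*} [CommSemiring R]
  [AddCommMonoid U] [Module R U] [AddCommMonoid V] [Module R V]
  [AddCommMonoid W] [Module R W] [AddCommMonoid X] [Module R X]

/-- Change of coefficients `(id ⊗ φ) ∘ f` along a linear map `φ : A → B`. -/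
def changeCoeff [AddCommMonoid A] [Module R A] [AddCommMonoid B] [Module R B]
    (φ : A →ₗ[R] B) (f : U →ₗ[R] V ⊗[R] A) : U →ₗ[R] V ⊗[R] B :=
  LinearMap.lTensor V φ ∘ₗ f

variable [Semiring A] [Algebra R A] [Semiring B] [Algebra R B]

variable (R A V) in
/-- The unit `v ↦ v ⊗ 1` of the monad `- ⊗ A`, which is also the trivial coaction. -/
def kleisliUnit : V →ₗ[R] V ⊗[R] A :=
  (TensorProduct.mk R V A).flip 1

theorem kleisliExtend_tmul (f : V →ₗ[R] W ⊗[R] A) (v : V) (a : A) :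
    kleisliExtend f (v ⊗ₜ a) = LinearMap.lTensor W (LinearMap.mulRight R a) (f v) := by
  simp only [kleisliExtend, LinearMap.comp_apply, LinearEquiv.coe_coe, LinearMap.rTensor_tmul]
  induction f v with
  | zero => simp
  | add y z hy hz => simp only [add_tmul, map_add, hy, hz]
  | tmul w b => simp

theorem kleisliExtend_lTensor_mulRight (f : V →ₗ[R] W ⊗[R] A) (a : A) (z : V ⊗[R] A) :
    kleisliExtend f (LinearMap.lTensor V (LinearMap.mulRight R a) z) =
      LinearMap.lTensor W (LinearMap.mulRight R a) (kleisliExtend f z) := by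
  induction z with
  | zero => simp
  | add y z hy hz => simp only [map_add, hy, hz]
  | tmul v b =>
    simp only [LinearMap.lTensor_tmul, LinearMap.mulRight_apply, kleisliExtend_tmul,
      LinearMap.mulRight_mul, LinearMap.lTensor_comp, LinearMap.comp_apply]

theorem kleisliComp_assoc (f : W →ₗ[R] X ⊗[R] A) (g : V →ₗ[R] W ⊗[R] A)
    (h : U →ₗ[R] V ⊗[R] A) : (f ∘ₖ g) ∘ₖ h = f ∘ₖ g ∘ₖ h := by
  have extend_comp : kleisliExtend (kleisliExtend f ∘ₗ g) = kleisliExtend f ∘ₗ kleisliExtend g :=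
    TensorProduct.ext' fun v a => by
      simp only [kleisliExtend_tmul, LinearMap.comp_apply, kleisliExtend_lTensor_mulRight]
  simp only [kleisliComp, extend_comp, LinearMap.comp_assoc]

theorem kleisliUnit_kleisliComp (f : U →ₗ[R] V ⊗[R] A) : kleisliUnit R A V ∘ₖ f = f := by
  have extend_unit : kleisliExtend (kleisliUnit R A V) = LinearMap.id :=
    TensorProduct.ext' fun v a => by simp [kleisliExtend_tmul, kleisliUnit]
  rw [kleisliComp, extend_unit, LinearMap.id_comp]

theorem kleisliComp_kleisliUnit (f : U →ₗ[R] V ⊗[R] A) : f ∘ₖ kleisliUnit R A U = f := by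
  ext u
  simp [kleisliComp, kleisliUnit, kleisliExtend_tmul]

theorem kleisliComp_rTensor_comp (f : W →ₗ[R] X ⊗[R] A) (u : V →ₗ[R] W)
    (g : U →ₗ[R] V ⊗[R] A) : f ∘ₖ (LinearMap.rTensor A u ∘ₗ g) = (f ∘ₗ u) ∘ₖ g := by
  simp only [kleisliComp, kleisliExtend, LinearMap.rTensor_comp, LinearMap.comp_assoc]

theorem rTensor_comp_kleisliComp (u : W →ₗ[R] X) (f : V →ₗ[R] W ⊗[R] A)
    (g : U →ₗ[R] V ⊗[R] A) :
    LinearMap.rTensor A u ∘ₗ (f ∘ₖ g) = (LinearMap.rTensor A u ∘ₗ f) ∘ₖ g := by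
  have extend_comp : LinearMap.rTensor A u ∘ₗ kleisliExtend f =
      kleisliExtend (LinearMap.rTensor A u ∘ₗ f) :=
    TensorProduct.ext' fun v a => by
      simp only [LinearMap.comp_apply, kleisliExtend_tmul]
      exact LinearMap.congr_fun ((LinearMap.rTensor_comp_lTensor _ _ _).trans
        (LinearMap.lTensor_comp_rTensor _ _ _).symm) (f v)
  exact congrArg (· ∘ₗ g) extend_comp

theorem changeCoeff_kleisliComp (φ : A →ₐ[R] B) (f : V →ₗ[R] W ⊗[R] A)
    (g : U →ₗ[R] V ⊗[R] A) :
    changeCoeff φ.toLinearMap (f ∘ₖ g) =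
      changeCoeff φ.toLinearMap f ∘ₖ changeCoeff φ.toLinearMap g := by
  have extend_comm : LinearMap.lTensor W φ.toLinearMap ∘ₗ kleisliExtend f =
      kleisliExtend (changeCoeff φ.toLinearMap f) ∘ₗ LinearMap.lTensor V φ.toLinearMap := by
    refine TensorProduct.ext' fun v a => ?_
    have map_mulRight : φ.toLinearMap ∘ₗ LinearMap.mulRight R a =
        LinearMap.mulRight R (φ a) ∘ₗ φ.toLinearMap := by ext; simp
    simp only [LinearMap.comp_apply, kleisliExtend_tmul, LinearMap.lTensor_tmul, changeCoeff,
      AlgHom.toLinearMap_apply, ← LinearMap.lTensor_comp_apply, map_mulRight]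
  exact congrArg (· ∘ₗ g) extend_comm

/-- `f` with its coefficients placed in the first factor of `A ⊗ A`. -/
def leftCoeff (f : U →ₗ[R] V ⊗[R] A) : U →ₗ[R] V ⊗[R] (A ⊗[R] A) :=
  changeCoeff (Algebra.TensorProduct.includeLeft : A →ₐ[R] A ⊗[R] A).toLinearMap f

/-- `f` with its coefficients placed in the second factor of `A ⊗ A`. -/
def rightCoeff (f : U →ₗ[R] V ⊗[R] A) : U →ₗ[R] V ⊗[R] (A ⊗[R] A) :=
  changeCoeff (Algebra.TensorProduct.includeRight : A →ₐ[R] A ⊗[R] A).toLinearMap f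

theorem leftCoeff_kleisliComp (f : V →ₗ[R] W ⊗[R] A) (g : U →ₗ[R] V ⊗[R] A) :
    leftCoeff (f ∘ₖ g) = leftCoeff f ∘ₖ leftCoeff g :=
  changeCoeff_kleisliComp _ f g

theorem rightCoeff_kleisliComp (f : V →ₗ[R] W ⊗[R] A) (g : U →ₗ[R] V ⊗[R] A) :
    rightCoeff (f ∘ₖ g) = rightCoeff f ∘ₖ rightCoeff g :=
  changeCoeff_kleisliComp _ f g

theorem leftCoeff_kleisliComp_rightCoeff (f : V →ₗ[R] W ⊗[R] A) (g : U →ₗ[R] V ⊗[R] A) :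
    leftCoeff f ∘ₖ rightCoeff g =
      (TensorProduct.assoc R W A A).toLinearMap ∘ₗ LinearMap.rTensor A f ∘ₗ g := by
  have extend_comp : kleisliExtend (leftCoeff f) ∘ₗ LinearMap.lTensor V
        (Algebra.TensorProduct.includeRight : A →ₐ[R] A ⊗[R] A).toLinearMap =
      (TensorProduct.assoc R W A A).toLinearMap ∘ₗ LinearMap.rTensor A f := by
    refine TensorProduct.ext' fun v a => ?_
    simp only [LinearMap.comp_apply, kleisliExtend_tmul, leftCoeff, changeCoeff,
      LinearMap.lTensor_tmul, LinearMap.rTensor_tmul]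
    induction f v with
    | zero => simp
    | add y z hy hz => simp only [add_tmul, map_add, hy, hz]
    | tmul w b => simp
  exact congrArg (· ∘ₗ g) extend_comp

theorem rightCoeff_kleisliComp_leftCoeff (f : V →ₗ[R] W ⊗[R] A) (g : U →ₗ[R] V ⊗[R] A) :
    rightCoeff f ∘ₖ leftCoeff g =
      (TensorProduct.assoc R W A A).toLinearMap ∘ₗ (TensorProduct.rightComm R W A A).toLinearMap ∘ₗ
        LinearMap.rTensor A f ∘ₗ g := by
  have extend_comp : kleisliExtend (rightCoeff f) ∘ₗ LinearMap.lTensor V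
        (Algebra.TensorProduct.includeLeft : A →ₐ[R] A ⊗[R] A).toLinearMap =
      (TensorProduct.assoc R W A A).toLinearMap ∘ₗ
        (TensorProduct.rightComm R W A A).toLinearMap ∘ₗ LinearMap.rTensor A f := by
    refine TensorProduct.ext' fun v a => ?_
    simp only [LinearMap.comp_apply, kleisliExtend_tmul, rightCoeff, changeCoeff,
      LinearMap.lTensor_tmul, LinearMap.rTensor_tmul]
    induction f v with
    | zero => simp
    | add y z hy hz => simp only [add_tmul, map_add, hy, hz]
    | tmul w b => simp
  exact congrArg (· ∘ₗ g) extend_comp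

end KleisliCategory

section Coaction

variable {R A V W : Type*} [CommSemiring R] [AddCommMonoid V] [Module R V]
  [AddCommMonoid W] [Module R W]

/-- `ρ` is a coassociative and counital right coaction of the coalgebra `A` on `V`. -/
structure IsCoaction [AddCommMonoid A] [Module R A] [Coalgebra R A]
    (ρ : V →ₗ[R] V ⊗[R] A) : Prop where
  coassoc : LinearMap.rTensor A ρ ∘ₗ ρ =
    (TensorProduct.assoc R V A A).symm.toLinearMap ∘ₗ LinearMap.lTensor V comul ∘ₗ ρ
  counit : (TensorProduct.rid R V).toLinearMap ∘ₗ LinearMap.lTensor V counit ∘ₗ ρ = LinearMap.id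

/-- `u` is a morphism from `V` with the coaction `ρ` to `W` with the coaction `σ`. -/
def IsComoduleHom [AddCommMonoid A] [Module R A] (u : V →ₗ[R] W) (ρ : V →ₗ[R] V ⊗[R] A)
    (σ : W →ₗ[R] W ⊗[R] A) : Prop :=
  σ ∘ₗ u = LinearMap.rTensor A u ∘ₗ ρ

/-- `ρ` and `σ` commute as operators on `V`, their values in `A` being kept apart in `A ⊗ A`. -/
def CoactionsCommute [Semiring A] [Algebra R A] (ρ σ : V →ₗ[R] V ⊗[R] A) : Prop :=
  rightCoeff ρ ∘ₖ leftCoeff σ = leftCoeff σ ∘ₖ rightCoeff ρ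

section Algebra

variable [Semiring A] [Algebra R A]

theorem coactionsCommute_iff {ρ σ : V →ₗ[R] V ⊗[R] A} : CoactionsCommute ρ σ ↔
    (TensorProduct.rightComm R V A A).toLinearMap ∘ₗ LinearMap.rTensor A ρ ∘ₗ σ =
      LinearMap.rTensor A σ ∘ₗ ρ := by
  rw [CoactionsCommute, rightCoeff_kleisliComp_leftCoeff, leftCoeff_kleisliComp_rightCoeff]
  exact LinearMap.cancel_left (TensorProduct.assoc R V A A).injective

theorem CoactionsCommute.symm {ρ σ : V →ₗ[R] V ⊗[R] A} (h : CoactionsCommute ρ σ) :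
    CoactionsCommute σ ρ := by
  rw [coactionsCommute_iff] at h ⊢
  exact h ▸ LinearMap.ext fun m => (TensorProduct.rightComm R V A A).symm_apply_apply _

theorem CoactionsCommute.kleisliComp_right {ρ σ τ : V →ₗ[R] V ⊗[R] A}
    (hσ : CoactionsCommute ρ σ) (hτ : CoactionsCommute ρ τ) : CoactionsCommute ρ (σ ∘ₖ τ) := by
  rw [CoactionsCommute] at *
  rw [leftCoeff_kleisliComp, ← kleisliComp_assoc, hσ, kleisliComp_assoc, hτ, kleisliComp_assoc]

theorem IsComoduleHom.kleisliComp {u : V →ₗ[R] W} {ρ₁ ρ₂ : V →ₗ[R] V ⊗[R] A}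
    {σ₁ σ₂ : W →ₗ[R] W ⊗[R] A} (h₁ : IsComoduleHom u ρ₁ σ₁) (h₂ : IsComoduleHom u ρ₂ σ₂) :
    IsComoduleHom u (ρ₁ ∘ₖ ρ₂) (σ₁ ∘ₖ σ₂) := by
  calc (σ₁ ∘ₖ σ₂) ∘ₗ u
    _ = σ₁ ∘ₖ (LinearMap.rTensor A u ∘ₗ ρ₂) := congrArg (σ₁ ∘ₖ ·) h₂
    _ = (LinearMap.rTensor A u ∘ₗ ρ₁) ∘ₖ ρ₂ := by rw [kleisliComp_rTensor_comp, h₁]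
    _ = LinearMap.rTensor A u ∘ₗ (ρ₁ ∘ₖ ρ₂) := (rTensor_comp_kleisliComp u ρ₁ ρ₂).symm

end Algebra

section Bialgebra

variable [Semiring A] [Bialgebra R A] {ρ σ : V →ₗ[R] V ⊗[R] A}

theorem isCoaction_iff : IsCoaction ρ ↔
    changeCoeff comul ρ = leftCoeff ρ ∘ₖ rightCoeff ρ ∧
      changeCoeff counit ρ = kleisliUnit R R V := by
  have counit_iff : (TensorProduct.rid R V).toLinearMap ∘ₗ LinearMap.lTensor V counit ∘ₗ ρ =
      LinearMap.id ↔ changeCoeff counit ρ = kleisliUnit R R V := by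
    rw [← LinearEquiv.eq_toLinearMap_symm_comp]
    rfl
  rw [leftCoeff_kleisliComp_rightCoeff, ← counit_iff, ← LinearEquiv.toLinearMap_symm_comp_eq]
  exact ⟨fun h => ⟨h.coassoc.symm, h.counit⟩, fun h => ⟨h.1.symm, h.2⟩⟩

theorem IsCoaction.kleisliComp (hρ : IsCoaction ρ) (hσ : IsCoaction σ)
    (h : CoactionsCommute ρ σ) : IsCoaction (ρ ∘ₖ σ) := by
  obtain ⟨comul_ρ, counit_ρ⟩ := isCoaction_iff.mp hρ
  obtain ⟨comul_σ, counit_σ⟩ := isCoaction_iff.mp hσ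
  refine isCoaction_iff.mpr ⟨?_, ?_⟩
  · calc changeCoeff comul (ρ ∘ₖ σ)
      _ = changeCoeff comul ρ ∘ₖ changeCoeff comul σ :=
        changeCoeff_kleisliComp (Bialgebra.comulAlgHom R A) ρ σ
      _ = leftCoeff ρ ∘ₖ (rightCoeff ρ ∘ₖ leftCoeff σ) ∘ₖ rightCoeff σ := by
        rw [comul_ρ, comul_σ, kleisliComp_assoc, kleisliComp_assoc]
      _ = leftCoeff ρ ∘ₖ (leftCoeff σ ∘ₖ rightCoeff ρ) ∘ₖ rightCoeff σ := by
        rw [h]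
      _ = leftCoeff (ρ ∘ₖ σ) ∘ₖ rightCoeff (ρ ∘ₖ σ) := by
        rw [leftCoeff_kleisliComp, rightCoeff_kleisliComp, kleisliComp_assoc, kleisliComp_assoc]
  · have counit_comp := changeCoeff_kleisliComp (Bialgebra.counitAlgHom R A) ρ σ
    rw [Bialgebra.toLinearMap_counitAlgHom, counit_ρ, counit_σ] at counit_comp
    exact counit_comp.trans (kleisliUnit_kleisliComp _)

end Bialgebra

end Coaction

section TensorFactors

variable {R A B M M' M'' N N' N'' : Type*} [CommSemiring R]
  [AddCommMonoid M] [Module R M] [AddCommMonoid M'] [Module R M']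
  [AddCommMonoid M''] [Module R M''] [AddCommMonoid N] [Module R N]
  [AddCommMonoid N'] [Module R N'] [AddCommMonoid N''] [Module R N'']

section Linear

variable [AddCommMonoid A] [Module R A] [AddCommMonoid B] [Module R B]

variable (N) in
/-- `f : M → M' ⊗ A` acting on the first factor of `M ⊗ N`, as `m ⊗ n ↦ (f(m)₍₀₎ ⊗ n) ⊗ f(m)₍₁₎`. -/
def coactRTensor (f : M →ₗ[R] M' ⊗[R] A) : M ⊗[R] N →ₗ[R] (M' ⊗[R] N) ⊗[R] A :=
  (TensorProduct.rightComm R M' A N).toLinearMap ∘ₗ LinearMap.rTensor N f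

variable (M) in
/-- `g : N → N' ⊗ A` acting on the second factor of `M ⊗ N`, as
`m ⊗ n ↦ (m ⊗ g(n)₍₀₎) ⊗ g(n)₍₁₎`. -/
def coactLTensor (g : N →ₗ[R] N' ⊗[R] A) : M ⊗[R] N →ₗ[R] (M ⊗[R] N') ⊗[R] A :=
  (TensorProduct.assoc R M N' A).symm.toLinearMap ∘ₗ LinearMap.lTensor M g

theorem coactRTensor_tmul (f : M →ₗ[R] M' ⊗[R] A) (m : M) (n : N) :
    coactRTensor N f (m ⊗ₜ n) = TensorProduct.rightComm R M' A N (f m ⊗ₜ n) :=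
  rfl

theorem coactLTensor_tmul (g : N →ₗ[R] N' ⊗[R] A) (m : M) (n : N) :
    coactLTensor M g (m ⊗ₜ n) = (TensorProduct.assoc R M N' A).symm (m ⊗ₜ g n) :=
  rfl

theorem changeCoeff_coactRTensor (φ : A →ₗ[R] B) (f : M →ₗ[R] M' ⊗[R] A) :
    changeCoeff φ (coactRTensor N f) = coactRTensor N (changeCoeff φ f) := by
  refine TensorProduct.ext' fun m n => ?_
  simp only [changeCoeff, LinearMap.comp_apply, coactRTensor_tmul]
  induction f m with
  | zero => simp
  | add y z hy hz => simp only [add_tmul, map_add, hy, hz]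
  | tmul m' a => simp

theorem changeCoeff_coactLTensor (φ : A →ₗ[R] B) (g : N →ₗ[R] N' ⊗[R] A) :
    changeCoeff φ (coactLTensor M g) = coactLTensor M (changeCoeff φ g) := by
  refine TensorProduct.ext' fun m n => ?_
  simp only [changeCoeff, LinearMap.comp_apply, coactLTensor_tmul]
  induction g n with
  | zero => simp
  | add y z hy hz => simp only [tmul_add, map_add, hy, hz]
  | tmul n' a => simp

end Linear

section Algebra

variable [Semiring A] [Algebra R A]

theorem coactRTensor_kleisliUnit :
    coactRTensor N (kleisliUnit R A M) = kleisliUnit R A (M ⊗[R] N) :=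
  TensorProduct.ext' fun _ _ => rfl

theorem coactLTensor_kleisliUnit :
    coactLTensor M (kleisliUnit R A N) = kleisliUnit R A (M ⊗[R] N) :=
  TensorProduct.ext' fun _ _ => rfl

theorem coactRTensor_kleisliComp (f : M' →ₗ[R] M'' ⊗[R] A) (g : M →ₗ[R] M' ⊗[R] A) :
    coactRTensor N (f ∘ₖ g) = coactRTensor N f ∘ₖ coactRTensor N g := by
  refine TensorProduct.ext' fun m n => ?_
  simp only [kleisliComp, LinearMap.comp_apply, coactRTensor_tmul]
  induction g m with
  | zero => simp
  | add y z hy hz => simp only [add_tmul, map_add, hy, hz]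
  | tmul m' a =>
    simp only [kleisliExtend_tmul, TensorProduct.rightComm_tmul]
    exact (LinearMap.congr_fun
      (changeCoeff_coactRTensor (LinearMap.mulRight R a) f) (m' ⊗ₜ n)).symm

theorem coactLTensor_kleisliComp (f : N' →ₗ[R] N'' ⊗[R] A) (g : N →ₗ[R] N' ⊗[R] A) :
    coactLTensor M (f ∘ₖ g) = coactLTensor M f ∘ₖ coactLTensor M g := by
  refine TensorProduct.ext' fun m n => ?_
  simp only [kleisliComp, LinearMap.comp_apply, coactLTensor_tmul]
  induction g n with
  | zero => simp
  | add y z hy hz => simp only [tmul_add, map_add, hy, hz]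
  | tmul n' a =>
    simp only [kleisliExtend_tmul, TensorProduct.assoc_symm_tmul]
    exact (LinearMap.congr_fun
      (changeCoeff_coactLTensor (LinearMap.mulRight R a) f) (m ⊗ₜ n')).symm

theorem coactionsCommute_coactRTensor_coactLTensor (ρ : M →ₗ[R] M ⊗[R] A)
    (σ : N →ₗ[R] N ⊗[R] A) : CoactionsCommute (coactRTensor N ρ) (coactLTensor M σ) := by
  rw [coactionsCommute_iff]
  refine TensorProduct.ext' fun m n => ?_
  have ρ_after_σ (z : N ⊗[R] A) :
      LinearMap.rTensor A (coactRTensor N ρ) ((TensorProduct.assoc R M N A).symm (m ⊗ₜ z)) =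
        LinearMap.rTensor A (TensorProduct.rightComm R M A N).toLinearMap
          ((TensorProduct.assoc R (M ⊗[R] A) N A).symm (ρ m ⊗ₜ z)) := by
    induction z with
    | zero => simp
    | add y z hy hz => simp only [tmul_add, map_add, hy, hz]
    | tmul n a => simp [coactRTensor_tmul]
  have σ_after_ρ (y : M ⊗[R] A) :
      LinearMap.rTensor A (coactLTensor M σ) (TensorProduct.rightComm R M A N (y ⊗ₜ n)) =
        LinearMap.rTensor A (TensorProduct.assoc R M N A).symm.toLinearMap
          (TensorProduct.rightComm R M A (N ⊗[R] A) (y ⊗ₜ σ n)) := by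
    induction y with
    | zero => simp
    | add y z hy hz => simp only [add_tmul, map_add, hy, hz]
    | tmul m a => simp [coactLTensor_tmul]
  simp only [LinearMap.comp_apply, coactRTensor_tmul, coactLTensor_tmul, ρ_after_σ, σ_after_ρ]
  induction σ n with
  | zero => simp
  | add y z hy hz => simp only [tmul_add, map_add, hy, hz]
  | tmul n b =>
    induction ρ m with
    | zero => simp
    | add y z hy hz => simp only [add_tmul, map_add, hy, hz]
    | tmul m a => simp

variable (N) in
theorem CoactionsCommute.coactRTensor {ρ σ : M →ₗ[R] M ⊗[R] A} (h : CoactionsCommute ρ σ) :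
    CoactionsCommute (coactRTensor N ρ) (coactRTensor N σ) := by
  unfold CoactionsCommute leftCoeff rightCoeff at h ⊢
  simp only [changeCoeff_coactRTensor, ← coactRTensor_kleisliComp]
  rw [h]

end Algebra

section Bialgebra

variable [Semiring A] [Bialgebra R A]

variable (N) in
theorem IsCoaction.coactRTensor {ρ : M →ₗ[R] M ⊗[R] A} (hρ : IsCoaction ρ) :
    IsCoaction (coactRTensor N ρ) := by
  obtain ⟨comul_ρ, counit_ρ⟩ := isCoaction_iff.mp hρ
  refine isCoaction_iff.mpr ⟨?_, ?_⟩
  · rw [changeCoeff_coactRTensor, comul_ρ, coactRTensor_kleisliComp]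
    simp only [leftCoeff, rightCoeff, changeCoeff_coactRTensor]
  · rw [changeCoeff_coactRTensor, counit_ρ, coactRTensor_kleisliUnit]

variable (M) in
theorem IsCoaction.coactLTensor {ρ : N →ₗ[R] N ⊗[R] A} (hρ : IsCoaction ρ) :
    IsCoaction (coactLTensor M ρ) := by
  obtain ⟨comul_ρ, counit_ρ⟩ := isCoaction_iff.mp hρ
  refine isCoaction_iff.mpr ⟨?_, ?_⟩
  · rw [changeCoeff_coactLTensor, comul_ρ, coactLTensor_kleisliComp]
    simp only [leftCoeff, rightCoeff, changeCoeff_coactLTensor]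
  · rw [changeCoeff_coactLTensor, counit_ρ, coactLTensor_kleisliUnit]

end Bialgebra

end TensorFactors

theorem isCoaction_comul {R A : Type*} [CommSemiring R] [AddCommMonoid A] [Module R A]
    [Coalgebra R A] : IsCoaction (comul : A →ₗ[R] A ⊗[R] A) where
  coassoc := coassoc_symm.symm
  counit := by
    rw [lTensor_counit_comp_comul]
    ext a
    simp

section Convolution

open WithConv

variable {R A B : Type*} [CommSemiring R] [Semiring A]

theorem toConv_includeLeft_mul_includeRight [Bialgebra R A] :
    toConv (Algebra.TensorProduct.includeLeft : A →ₐ[R] A ⊗[R] A).toLinearMap *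
      toConv (Algebra.TensorProduct.includeRight : A →ₐ[R] A ⊗[R] A).toLinearMap =
        toConv comul := by
  ext a
  rw [(ℛ R a).convMul_apply]
  simp [(ℛ R a).eq]

variable [HopfAlgebra R A]

theorem toConv_comp_antipode_mul [Semiring B] [Algebra R B] (φ : A →ₐ[R] B) :
    toConv (φ.toLinearMap ∘ₗ antipode R) * toConv φ.toLinearMap = 1 := by
  have comp_mul := congrArg toConv (LinearMap.algHom_comp_convMul_distrib φ
    (toConv (antipode R)) (toConv LinearMap.id))
  rw [LinearMap.antipode_mul_id] at comp_mul
  refine comp_mul.symm.trans ?_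
  ext a
  simp

-- `Δ` is the convolution product `ι₁ * ι₂` of the inclusions of `A` in `A ⊗ A`, so both sides are
-- its convolution inverse.
theorem comul_comp_antipode :
    (comul ∘ₗ antipode R : A →ₗ[R] A ⊗[R] A) =
      TensorProduct.map (antipode R) (antipode R) ∘ₗ
        (TensorProduct.comm R A A).toLinearMap ∘ₗ comul := by
  let ι₁ : A →ₐ[R] A ⊗[R] A := Algebra.TensorProduct.includeLeft
  let ι₂ : A →ₐ[R] A ⊗[R] A := Algebra.TensorProduct.includeRight
  have left_inv : toConv (ι₂.toLinearMap ∘ₗ antipode R) * toConv (ι₁.toLinearMap ∘ₗ antipode R) *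
      toConv comul = 1 := by
    rw [← toConv_includeLeft_mul_includeRight, mul_assoc,
      ← mul_assoc (toConv (ι₁.toLinearMap ∘ₗ _)), toConv_comp_antipode_mul, one_mul,
      toConv_comp_antipode_mul]
  have antipode_swap : toConv (ι₂.toLinearMap ∘ₗ antipode R) *
      toConv (ι₁.toLinearMap ∘ₗ antipode R) =
        toConv (TensorProduct.map (antipode R) (antipode R) ∘ₗ
          (TensorProduct.comm R A A).toLinearMap ∘ₗ comul) := by
    ext a
    rw [(ℛ R a).convMul_apply]
    simp [← (ℛ R a).eq, ι₁, ι₂]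
  rw [antipode_swap] at left_inv
  exact (toConv_injective (left_inv_eq_right_inv left_inv LinearMap.comul_right_inv)).symm

end Convolution

section AntipodeCoaction

variable {R A : Type*} [CommSemiring R] [Semiring A] [HopfAlgebra R A]

variable (R A) in
/-- The coaction `x ↦ x⁽²⁾ ⊗ S(x⁽¹⁾)` of `A` on itself, the counterpart of the action of a group on
itself by `g • x = x g⁻¹`. -/
def antipodeCoact : A →ₗ[R] A ⊗[R] A :=
  (TensorProduct.comm R A A).toLinearMap ∘ₗ LinearMap.rTensor A (antipode R) ∘ₗ comul

theorem lTensor_comul_comp_antipodeCoact :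
    LinearMap.lTensor A comul ∘ₗ antipodeCoact R A =
      (TensorProduct.comm R (A ⊗[R] A) A).toLinearMap ∘ₗ
        LinearMap.rTensor A (TensorProduct.map (antipode R) (antipode R) ∘ₗ
          (TensorProduct.comm R A A).toLinearMap) ∘ₗ LinearMap.rTensor A comul ∘ₗ comul := by
  have comm_naturality (u : A →ₗ[R] A ⊗[R] A) :
      LinearMap.lTensor A u ∘ₗ (TensorProduct.comm R A A).toLinearMap =
        (TensorProduct.comm R (A ⊗[R] A) A).toLinearMap ∘ₗ LinearMap.rTensor A u := by
    ext; simp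
  calc LinearMap.lTensor A comul ∘ₗ antipodeCoact R A
    _ = (TensorProduct.comm R (A ⊗[R] A) A).toLinearMap ∘ₗ
          LinearMap.rTensor A (comul ∘ₗ antipode R) ∘ₗ comul := by
      rw [antipodeCoact, ← LinearMap.comp_assoc, comm_naturality, LinearMap.comp_assoc,
        LinearMap.rTensor_comp, LinearMap.comp_assoc]
    _ = _ := by
      rw [comul_comp_antipode]
      simp only [LinearMap.rTensor_comp, LinearMap.comp_assoc]

theorem isCoaction_antipodeCoact : IsCoaction (antipodeCoact R A) where
  coassoc := by
    have rTensor_comm (u : A →ₗ[R] A ⊗[R] A) :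
        LinearMap.rTensor A ((TensorProduct.comm R A A).toLinearMap ∘ₗ
            LinearMap.rTensor A (antipode R) ∘ₗ u) ∘ₗ (TensorProduct.comm R A A).toLinearMap ∘ₗ
              LinearMap.rTensor A (antipode R) =
          (TensorProduct.assoc R A A A).symm.toLinearMap ∘ₗ
            (TensorProduct.comm R (A ⊗[R] A) A).toLinearMap ∘ₗ
              LinearMap.rTensor A (TensorProduct.map (antipode R) (antipode R) ∘ₗ
                (TensorProduct.comm R A A).toLinearMap) ∘ₗ
                  (TensorProduct.assoc R A A A).symm.toLinearMap ∘ₗ LinearMap.lTensor A u := by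
      refine TensorProduct.ext' fun x y => ?_
      simp only [LinearMap.comp_apply, LinearEquiv.coe_coe, LinearMap.rTensor_tmul,
        LinearMap.lTensor_tmul, TensorProduct.comm_tmul]
      induction u y with
      | zero => simp
      | add y z hy hz => simp only [add_tmul, tmul_add, map_add, hy, hz]
      | tmul y₁ y₂ => simp
    rw [lTensor_comul_comp_antipodeCoact, ← coassoc_symm]
    exact congrArg (· ∘ₗ comul) (rTensor_comm comul)
  counit := by
    have counit_comm : (TensorProduct.rid R A).toLinearMap ∘ₗ LinearMap.lTensor A counit ∘ₗ
        (TensorProduct.comm R A A).toLinearMap ∘ₗ LinearMap.rTensor A (antipode R) =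
          (TensorProduct.lid R A).toLinearMap ∘ₗ LinearMap.rTensor A counit := by
      ext; simp
    refine (congrArg (· ∘ₗ comul) counit_comm).trans ?_
    ext; simp

theorem coactionsCommute_comul_antipodeCoact :
    CoactionsCommute (comul : A →ₗ[R] A ⊗[R] A) (antipodeCoact R A) := by
  have rightComm_comm (u : A →ₗ[R] A ⊗[R] A) :
      (TensorProduct.rightComm R A A A).toLinearMap ∘ₗ LinearMap.rTensor A u ∘ₗ
          (TensorProduct.comm R A A).toLinearMap ∘ₗ LinearMap.rTensor A (antipode R) =
        LinearMap.rTensor A ((TensorProduct.comm R A A).toLinearMap ∘ₗ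
            LinearMap.rTensor A (antipode R)) ∘ₗ
          (TensorProduct.assoc R A A A).symm.toLinearMap ∘ₗ LinearMap.lTensor A u := by
    refine TensorProduct.ext' fun x y => ?_
    simp only [LinearMap.comp_apply, LinearEquiv.coe_coe, LinearMap.rTensor_tmul,
      LinearMap.lTensor_tmul, TensorProduct.comm_tmul]
    induction u y with
    | zero => simp
    | add y z hy hz => simp only [add_tmul, tmul_add, map_add, hy, hz]
    | tmul y₁ y₂ => simp
  rw [coactionsCommute_iff]
  calc (TensorProduct.rightComm R A A A).toLinearMap ∘ₗ LinearMap.rTensor A comul ∘ₗ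
        antipodeCoact R A
    _ = LinearMap.rTensor A ((TensorProduct.comm R A A).toLinearMap ∘ₗ
            LinearMap.rTensor A (antipode R)) ∘ₗ
          (TensorProduct.assoc R A A A).symm.toLinearMap ∘ₗ LinearMap.lTensor A comul ∘ₗ comul :=
      congrArg (· ∘ₗ comul) (rightComm_comm comul)
    _ = LinearMap.rTensor A (antipodeCoact R A) ∘ₗ comul := by
      rw [coassoc_symm]
      simp only [antipodeCoact, LinearMap.rTensor_comp, LinearMap.comp_assoc]

theorem antipodeCoact_mul (x y : A) : antipodeCoact R A (x * y) =
    TensorProduct.map (LinearMap.mul' R A)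
      (LinearMap.mul' R A ∘ₗ (TensorProduct.comm R A A).toLinearMap)
      (TensorProduct.tensorTensorTensorComm R A A A A
        (antipodeCoact R A x ⊗ₜ antipodeCoact R A y)) := by
  simp only [antipodeCoact, LinearMap.comp_apply, LinearEquiv.coe_coe, Bialgebra.comul_mul]
  induction comul (R := R) x with
  | zero => simp
  | add y z hy hz => simp only [add_mul, add_tmul, map_add, hy, hz]
  | tmul x₁ x₂ =>
    induction comul (R := R) y with
    | zero => simp
    | add y z hy hz => simp only [mul_add, tmul_add, map_add, hy, hz]
    | tmul y₁ y₂ => simp [antipode_mul_antidistrib]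

end AntipodeCoaction

section AdjointCoaction

variable {R A V : Type*} [CommSemiring R] [AddCommMonoid V] [Module R V] [Semiring A]

variable (R A V) in
/-- The action `x ⊗ (y ⊗ v) ↦ x y ⊗ v` of the algebra `A` on the free module `A ⊗ V`. -/
def freeAct [Algebra R A] : A ⊗[R] (A ⊗[R] V) →ₗ[R] A ⊗[R] V :=
  LinearMap.rTensor V (LinearMap.mul' R A) ∘ₗ (TensorProduct.assoc R A A V).symm.toLinearMap

theorem freeAct_tmul [Algebra R A] (x y : A) (v : V) :
    freeAct R A V (x ⊗ₜ (y ⊗ₜ v)) = (x * y) ⊗ₜ v :=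
  rfl

theorem isComoduleHom_freeAct_coactLTensor [Algebra R A] (ρ : V →ₗ[R] V ⊗[R] A) :
    IsComoduleHom (freeAct R A V) (coactLTensor A (coactLTensor A ρ)) (coactLTensor A ρ) := by
  refine TensorProduct.ext_threefold' fun x y v => ?_
  simp only [LinearMap.comp_apply, freeAct_tmul, coactLTensor_tmul]
  induction ρ v with
  | zero => simp
  | add y z hy hz => simp only [tmul_add, map_add, hy, hz]
  | tmul w b => simp [freeAct_tmul]

theorem isComoduleHom_freeAct_comul [Bialgebra R A] : IsComoduleHom (freeAct R A V)
    (coactRTensor (A ⊗[R] V) comul ∘ₖ coactLTensor A (coactRTensor V comul))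
    (coactRTensor V comul) := by
  refine TensorProduct.ext_threefold' fun x y v => ?_
  simp only [kleisliComp, LinearMap.comp_apply, freeAct_tmul, coactLTensor_tmul,
    coactRTensor_tmul, Bialgebra.comul_mul]
  induction comul (R := R) y with
  | zero => simp
  | add y z hy hz => simp only [mul_add, add_tmul, tmul_add, map_add, hy, hz]
  | tmul y₁ y₂ =>
    simp only [TensorProduct.rightComm_tmul, TensorProduct.assoc_symm_tmul, kleisliExtend_tmul,
      coactRTensor_tmul]
    induction comul (R := R) x with
    | zero => simp
    | add y z hy hz => simp only [add_mul, add_tmul, map_add, hy, hz]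
    | tmul x₁ x₂ => simp [freeAct_tmul]

variable [HopfAlgebra R A]

theorem isComoduleHom_freeAct_antipodeCoact : IsComoduleHom (freeAct R A V)
    (coactLTensor A (coactRTensor V (antipodeCoact R A)) ∘ₖ
      coactRTensor (A ⊗[R] V) (antipodeCoact R A))
    (coactRTensor V (antipodeCoact R A)) := by
  refine TensorProduct.ext_threefold' fun x y v => ?_
  simp only [kleisliComp, LinearMap.comp_apply, freeAct_tmul, coactRTensor_tmul,
    antipodeCoact_mul]
  induction antipodeCoact R A x with
  | zero => simp
  | add y z hy hz => simp only [add_tmul, map_add, hy, hz]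
  | tmul x₁ x₂ =>
    simp only [TensorProduct.rightComm_tmul, kleisliExtend_tmul, coactLTensor_tmul,
      coactRTensor_tmul]
    induction antipodeCoact R A y with
    | zero => simp
    | add y z hy hz => simp only [add_tmul, tmul_add, map_add, hy, hz]
    | tmul y₁ y₂ => simp [freeAct_tmul]

/-- The coaction `x ⊗ v ↦ (x⁽²⁾ ⊗ v₍₀₎) ⊗ x⁽³⁾ v₍₁₎ S(x⁽¹⁾)` on `A ⊗ V`, factored into the three
coactions that contribute `x⁽³⁾`, `v₍₁₎` and `S(x⁽¹⁾)`. -/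
def adCoact (ρ : V →ₗ[R] V ⊗[R] A) : A ⊗[R] V →ₗ[R] (A ⊗[R] V) ⊗[R] A :=
  coactRTensor V comul ∘ₖ coactLTensor A ρ ∘ₖ coactRTensor V (antipodeCoact R A)

theorem adCoact_adCoact (ρ : V →ₗ[R] V ⊗[R] A) : adCoact (adCoact ρ) =
    (coactRTensor (A ⊗[R] V) comul ∘ₖ coactLTensor A (coactRTensor V comul)) ∘ₖ
      coactLTensor A (coactLTensor A ρ) ∘ₖ
        coactLTensor A (coactRTensor V (antipodeCoact R A)) ∘ₖ
          coactRTensor (A ⊗[R] V) (antipodeCoact R A) := by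
  simp only [adCoact, coactLTensor_kleisliComp, kleisliComp_assoc]

theorem IsCoaction.adCoact {ρ : V →ₗ[R] V ⊗[R] A} (hρ : IsCoaction ρ) :
    IsCoaction (adCoact ρ) := by
  have comul_comm_ρ := coactionsCommute_coactRTensor_coactLTensor (comul : A →ₗ[R] A ⊗[R] A) ρ
  have ρ_comm_antipode :=
    (coactionsCommute_coactRTensor_coactLTensor (antipodeCoact R A) ρ).symm
  have comul_comm_antipode :=
    (coactionsCommute_comul_antipodeCoact (R := R) (A := A)).coactRTensor V
  exact (isCoaction_comul.coactRTensor V).kleisliComp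
    ((hρ.coactLTensor A).kleisliComp (isCoaction_antipodeCoact.coactRTensor V) ρ_comm_antipode)
    (comul_comm_ρ.kleisliComp_right comul_comm_antipode)

theorem isComoduleHom_mk_one_adCoact (ρ : V →ₗ[R] V ⊗[R] A) :
    IsComoduleHom (TensorProduct.mk R A V 1) ρ (adCoact ρ) := by
  have comul_hom : IsComoduleHom (TensorProduct.mk R A V 1) (kleisliUnit R A V)
      (coactRTensor V (comul : A →ₗ[R] A ⊗[R] A)) := by
    ext v
    simp [coactRTensor, kleisliUnit, Algebra.TensorProduct.one_def]
  have ρ_hom : IsComoduleHom (TensorProduct.mk R A V 1) ρ (coactLTensor A ρ) := by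
    ext v
    simp only [LinearMap.comp_apply, TensorProduct.mk_apply, coactLTensor_tmul]
    induction ρ v with
    | zero => simp
    | add y z hy hz => simp only [tmul_add, map_add, hy, hz]
    | tmul w b => simp
  have antipode_hom : IsComoduleHom (TensorProduct.mk R A V 1) (kleisliUnit R A V)
      (coactRTensor V (antipodeCoact R A)) := by
    ext v
    simp [coactRTensor, antipodeCoact, kleisliUnit, Algebra.TensorProduct.one_def]
  simpa only [adCoact, kleisliUnit_kleisliComp, kleisliComp_kleisliUnit] using
    comul_hom.kleisliComp (ρ_hom.kleisliComp antipode_hom)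

theorem isComoduleHom_freeAct_adCoact (ρ : V →ₗ[R] V ⊗[R] A) :
    IsComoduleHom (freeAct R A V) (adCoact (adCoact ρ)) (adCoact ρ) := by
  rw [adCoact_adCoact]
  exact isComoduleHom_freeAct_comul.kleisliComp
    ((isComoduleHom_freeAct_coactLTensor ρ).kleisliComp isComoduleHom_freeAct_antipodeCoact)

theorem stmt16_general {ρ : V →ₗ[R] V ⊗[R] A} (hρ : IsCoaction ρ) :
    IsCoaction (adCoact ρ) ∧ IsComoduleHom (TensorProduct.mk R A V 1) ρ (adCoact ρ) ∧
      IsComoduleHom (freeAct R A V) (adCoact (adCoact ρ)) (adCoact ρ) :=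
  ⟨hρ.adCoact, isComoduleHom_mk_one_adCoact ρ, isComoduleHom_freeAct_adCoact ρ⟩

end AdjointCoaction

theorem coact_eq_adCoact (T : Type) [AddCommGroup T] [Module k T] (ρT : T →ₗ[k] T ⊗[k] H) :
    coact k H T ρT = adCoact ρT := by
  refine TensorProduct.ext' fun x t => ?_
  simp only [coact, adCoact, kleisliComp, antipodeCoact, LinearMap.comp_apply,
    LinearEquiv.coe_coe, coactRTensor_tmul, LinearMap.lTensor_tmul, LinearMap.rTensor_tmul]
  induction comul (R := k) x with
  | zero => simp
  | add y z hy hz => simp only [add_tmul, map_add, hy, hz]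
  | tmul a b =>
    simp only [LinearMap.lTensor_tmul, LinearMap.rTensor_tmul, TensorProduct.comm_tmul,
      TensorProduct.rightComm_tmul, kleisliExtend_tmul, coactLTensor_tmul]
    induction ρT t with
    | zero => simp
    | add y z hy hz => simp only [tmul_add, map_add, hy, hz]
    | tmul s c =>
      simp only [TensorProduct.assoc_symm_tmul, LinearMap.lTensor_tmul, LinearMap.mulRight_apply,
        kleisliExtend_tmul, coactRTensor_tmul]
      induction comul (R := k) b with
      | zero => simp
      | add y z hy hz => simp only [add_tmul, tmul_add, map_add, hy, hz]
      | tmul b₁ b₂ => simp [mul_assoc]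

theorem stmt16 (T : Type) [AddCommGroup T] [Module k T] (ρT : T →ₗ[k] T ⊗[k] H)
    (hρ_coassoc : (LinearMap.rTensor H ρT) ∘ₗ ρT =
      (TensorProduct.assoc k T H H).symm.toLinearMap ∘ₗ
        (LinearMap.lTensor T (Coalgebra.comul (R := k))) ∘ₗ ρT)
    (hρ_counit : (TensorProduct.rid k T).toLinearMap ∘ₗ
        (LinearMap.lTensor T (Coalgebra.counit (R := k))) ∘ₗ ρT = LinearMap.id) :
    -- (i) `coact` is a coassociative counital coaction on `H ⊗ T`
    ((LinearMap.rTensor H (coact k H T ρT)) ∘ₗ coact k H T ρT =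
        (TensorProduct.assoc k (H ⊗[k] T) H H).symm.toLinearMap ∘ₗ
          (LinearMap.lTensor (H ⊗[k] T) (Coalgebra.comul (R := k))) ∘ₗ coact k H T ρT)
    ∧ ((TensorProduct.rid k (H ⊗[k] T)).toLinearMap ∘ₗ
        (LinearMap.lTensor (H ⊗[k] T) (Coalgebra.counit (R := k))) ∘ₗ coact k H T ρT =
        LinearMap.id)
    -- (ii) `t ↦ 1 ⊗ t` is a morphism of right `H`-comodules
    ∧ (coact k H T ρT ∘ₗ (TensorProduct.mk k H T 1) =
        (LinearMap.rTensor H (TensorProduct.mk k H T 1)) ∘ₗ ρT)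
    -- (iii) `x ⊗ y ⊗ t ↦ x y ⊗ t` is a morphism of right `H`-comodules, for the coaction
    -- on `H ⊗ (H ⊗ T)` obtained by applying the construction of (i) twice
    ∧ (coact k H T ρT ∘ₗ actHT k H T =
        (LinearMap.rTensor H (actHT k H T)) ∘ₗ coact k H (H ⊗[k] T) (coact k H T ρT)) := by
  simp only [coact_eq_adCoact]
  obtain ⟨⟨coassoc, counit⟩, unit_hom, act_hom⟩ := stmt16_general ⟨hρ_coassoc, hρ_counit⟩
  exact ⟨coassoc, counit, unit_hom, act_hom⟩

end
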